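/- Define the multigraph N_2 as follows: vertices u, w_1, w_2 and leaves a_1, a_2, b_1, b_2; edges alpha_1 = a_1u, alpha_2 = a_2u, gamma_1 = uw_1, gamma_2 = uw_2, beta_1 = w_1b_1, beta_2 = w_2b_2; exact conflict pairs ({alpha_1, alpha_2}, u) and ({gamma_1, gamma_2}, u). Call an orientation of N_2 valid if each of u, w_1, w_2 has even indegree and the set of edges with head u equals neither {alpha_1, alpha_2} nor {gamma_1, gamma_2}. Say that input edge alpha_i is right-oriented if its head is u, and that output edge beta_j is right-oriented if its head is b_j. Then: (i) every assignment of orientations to alpha_1 and alpha_2 extends to a valid orientation of N_2; (ii) in every valid orientation, the number of right-oriented output edges equals the number of right-oriented input edges; (iii) if exactly one input edge is right-oriented, then for each j in {1,2} there is a valid orientation in which beta_j is right-oriented and the other output edge is not. -/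

import Mathlib

open scoped Classical

noncomputable section

/-- The indegree of vertex `v` under the head-assignment `o`. -/
def indeg {V E : Type*} (o : E → V) (v : V) : ℕ := Nat.card {e // o e = v}

/-- `o` is an orientation of the multigraph with incidence map `ends`:
every edge is directed towards one of its two endpoints (its head). -/
def IsOrient {V E : Type*} (ends : E → V × V) (o : E → V) : Prop :=
  ∀ e, o e = (ends e).1 ∨ o e = (ends e).2

/-- Edge `e` is incident to vertex `v`. -/
def Inc {V E : Type*} (ends : E → V × V) (e : E) (v : V) : Prop :=
  (ends e).1 = v ∨ (ends e).2 = v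

/-- Vertices of the switching network `N₂`. -/
inductive V5 : Type
  | u | w1 | w2 | a1 | a2 | b1 | b2
deriving DecidableEq

/-- Edges of the switching network `N₂`. -/
inductive E5 : Type
  | al1 | al2 | ga1 | ga2 | be1 | be2
deriving DecidableEq

/-- Incidence map of `N₂`: `α i = a_i u`, `γ i = u w_i`, `β i = w_i b_i`. -/
def ends5 : E5 → V5 × V5
  | E5.al1 => (V5.a1, V5.u)
  | E5.al2 => (V5.a2, V5.u)
  | E5.ga1 => (V5.u, V5.w1)
  | E5.ga2 => (V5.u, V5.w2)
  | E5.be1 => (V5.w1, V5.b1)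
  | E5.be2 => (V5.w2, V5.b2)

/-- A valid orientation of `N₂`: each of `u, w₁, w₂` has even indegree and the set of
edges with head `u` equals neither `{α₁, α₂}` nor `{γ₁, γ₂}`. -/
def Valid5 (o : E5 → V5) : Prop :=
  IsOrient ends5 o ∧ Even (indeg o V5.u) ∧ Even (indeg o V5.w1) ∧ Even (indeg o V5.w2) ∧
    {e | o e = V5.u} ≠ ({E5.al1, E5.al2} : Set E5) ∧
    {e | o e = V5.u} ≠ ({E5.ga1, E5.ga2} : Set E5)

/-!
At `w_j` only `γ_j` and `β_j` are incident, so even indegree there means that both enter or both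
leave `w_j`: `β_j` is right-oriented iff `γ_j` has head `u`. At `u`, let `p` be the number of `α_i`
and `q` the number of `γ_j` with head `u`, so that `p, q ≤ 2`. Even indegree says `p ≡ q (mod 2)`,
and the two conflict pairs exclude exactly `(p, q) = (2, 0)` and `(p, q) = (0, 2)`; what remains is
`p = q`. Conversely, these conditions characterise validity, so the right-oriented inputs and
outputs can be prescribed freely as long as they are equal in number.
-/

section Ncard

variable {α : Type*}

theorem ncard_setOf_inter_pair (p : α → Prop) [DecidablePred p] {a b : α} (hab : a ≠ b) :
    ({x | p x} ∩ {a, b}).ncard = (if p a then 1 else 0) + (if p b then 1 else 0) := by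
  have hfilter : {x | p x} ∩ {a, b} = (({a, b} : Finset α).filter p : Set α) := by
    ext x
    simp [and_comm]
  rw [hfilter, Set.ncard_coe_finset, Finset.card_filter, Finset.sum_pair hab]

theorem eq_left_iff_ncard_inter {H A C : Set α} (hA : A.Finite) (hC : C.Finite)
    (hAC : Disjoint A C) (hH : H ⊆ A ∪ C) :
    H = A ↔ (H ∩ A).ncard = A.ncard ∧ (H ∩ C).ncard = 0 := by
  rw [Set.ncard_eq_zero (hC.inter_of_right H), ← Set.disjoint_iff_inter_eq_empty]
  constructor
  · rintro rfl
    exact ⟨by rw [Set.inter_self], hAC⟩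
  · rintro ⟨hcard, hHC⟩
    have hAH : H ∩ A = A := Set.eq_of_subset_of_ncard_le Set.inter_subset_right hcard.ge hA
    exact (hHC.subset_left_of_subset_union hH).antisymm (Set.inter_eq_right.mp hAH)

theorem even_ncard_and_ne_pairs_iff {H A C : Set α} (hA : A.ncard = 2) (hC : C.ncard = 2)
    (hAC : Disjoint A C) (hH : H ⊆ A ∪ C) :
    (Even H.ncard ∧ H ≠ A ∧ H ≠ C) ↔ (H ∩ A).ncard = (H ∩ C).ncard := by
  have hAfin : A.Finite := Set.finite_of_ncard_ne_zero (by simp [hA])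
  have hCfin : C.Finite := Set.finite_of_ncard_ne_zero (by simp [hC])
  have hsum : H.ncard = (H ∩ A).ncard + (H ∩ C).ncard := by
    rw [← Set.ncard_union_eq (hAC.mono Set.inter_subset_right Set.inter_subset_right)
      (hAfin.inter_of_right H) (hCfin.inter_of_right H), ← Set.inter_union_distrib_left,
      Set.inter_eq_left.mpr hH]
  have hA_le : (H ∩ A).ncard ≤ 2 := hA ▸ Set.ncard_le_ncard Set.inter_subset_right hAfin
  have hC_le : (H ∩ C).ncard ≤ 2 := hC ▸ Set.ncard_le_ncard Set.inter_subset_right hCfin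
  rw [ne_eq, ne_eq, eq_left_iff_ncard_inter hAfin hCfin hAC hH,
    eq_left_iff_ncard_inter hCfin hAfin hAC.symm (Set.union_comm A C ▸ hH), hA, hC, hsum,
    Nat.even_iff]
  lia

end Ncard

theorem indeg_eq_ncard {V E : Type*} (o : E → V) (v : V) : indeg o v = {e | o e = v}.ncard :=
  rfl

namespace IsOrient

variable {V E : Type*} {ends : E → V × V} {o : E → V}

theorem inc_head (ho : IsOrient ends o) (e : E) : Inc ends e (o e) :=
  (ho e).imp Eq.symm Eq.symm

theorem head_eq_fst_iff (ho : IsOrient ends o) {e : E} (hne : (ends e).1 ≠ (ends e).2) :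
    o e = (ends e).1 ↔ o e ≠ (ends e).2 :=
  ⟨fun h => h ▸ hne, (ho e).resolve_right⟩

theorem setOf_head_eq_subset (ho : IsOrient ends o) {v : V} {S : Set E}
    (hS : ∀ e, Inc ends e v → e ∈ S) : {e | o e = v} ⊆ S := by
  rintro e rfl
  exact hS e (ho.inc_head e)

theorem even_indeg_iff_of_inc_pair (ho : IsOrient ends o) {v : V} {e f : E} (hef : e ≠ f)
    (hv : ∀ g, Inc ends g v → g ∈ ({e, f} : Set E)) :
    Even (indeg o v) ↔ (o e = v ↔ o f = v) := by
  have hindeg : indeg o v = (if o e = v then 1 else 0) + (if o f = v then 1 else 0) := by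
    rw [← ncard_setOf_inter_pair (o · = v) hef,
      Set.inter_eq_left.mpr (ho.setOf_head_eq_subset hv), indeg_eq_ncard]
  rw [hindeg]
  split_ifs <;> simp_all

theorem even_indeg_iff_of_path (ho : IsOrient ends o) {x v y : V} {e f : E}
    (he : ends e = (x, v)) (hf : ends f = (v, y)) (hxv : x ≠ v) (hvy : v ≠ y)
    (hv : ∀ g, Inc ends g v → g ∈ ({e, f} : Set E)) :
    Even (indeg o v) ↔ (o e = x ↔ o f = y) := by
  have hef : e ≠ f := by
    rintro rfl
    exact hxv (congrArg Prod.fst (he.symm.trans hf))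
  have hhead_e : o e = x ↔ o e ≠ v := by
    simpa only [he] using ho.head_eq_fst_iff (e := e) (by simpa only [he] using hxv)
  have hhead_f : o f = v ↔ o f ≠ y := by
    simpa only [hf] using ho.head_eq_fst_iff (e := f) (by simpa only [hf] using hvy)
  rw [ho.even_indeg_iff_of_inc_pair hef hv, hhead_e, hhead_f]
  tauto

theorem even_indeg_and_ne_pairs_iff [DecidableEq V] (ho : IsOrient ends o) {v : V} {a b c d : E}
    (hab : a ≠ b) (hcd : c ≠ d) (hdisj : Disjoint ({a, b} : Set E) {c, d})
    (hv : ∀ e, Inc ends e v → e ∈ ({a, b} ∪ {c, d} : Set E)) :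
    (Even (indeg o v) ∧ {e | o e = v} ≠ {a, b} ∧ {e | o e = v} ≠ {c, d}) ↔
      (if o a = v then 1 else 0) + (if o b = v then 1 else 0) =
        (if o c = v then 1 else 0) + (if o d = v then 1 else 0) := by
  rw [← ncard_setOf_inter_pair (o · = v) hab, ← ncard_setOf_inter_pair (o · = v) hcd,
    indeg_eq_ncard]
  exact even_ncard_and_ne_pairs_iff (Set.ncard_pair hab) (Set.ncard_pair hcd) hdisj
    (ho.setOf_head_eq_subset hv)

end IsOrient

theorem valid5_iff {o : E5 → V5} :
    Valid5 o ↔ IsOrient ends5 o ∧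
      (o E5.ga1 = V5.u ↔ o E5.be1 = V5.b1) ∧ (o E5.ga2 = V5.u ↔ o E5.be2 = V5.b2) ∧
      (if o E5.al1 = V5.u then 1 else 0) + (if o E5.al2 = V5.u then 1 else 0) =
        (if o E5.ga1 = V5.u then 1 else 0) + (if o E5.ga2 = V5.u then 1 else 0) := by
  refine and_congr_right fun ho => ?_
  have hw₁ : Even (indeg o V5.w1) ↔ (o E5.ga1 = V5.u ↔ o E5.be1 = V5.b1) :=
    ho.even_indeg_iff_of_path rfl rfl nofun nofun (by rintro ⟨⟩ <;> simp [Inc, ends5])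
  have hw₂ : Even (indeg o V5.w2) ↔ (o E5.ga2 = V5.u ↔ o E5.be2 = V5.b2) :=
    ho.even_indeg_iff_of_path rfl rfl nofun nofun (by rintro ⟨⟩ <;> simp [Inc, ends5])
  have hu := ho.even_indeg_and_ne_pairs_iff (v := V5.u)
    (a := E5.al1) (b := E5.al2) (c := E5.ga1) (d := E5.ga2) nofun nofun
    (by simp) (by rintro ⟨⟩ <;> simp [Inc, ends5])
  rw [← hw₁, ← hw₂, ← hu]
  tauto

theorem Valid5.outputs_eq_inputs {o : E5 → V5} (h : Valid5 o) :
    ((if o E5.be1 = V5.b1 then 1 else 0) + (if o E5.be2 = V5.b2 then 1 else 0) : ℕ) =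
      (if o E5.al1 = V5.u then 1 else 0) + (if o E5.al2 = V5.u then 1 else 0) := by
  obtain ⟨-, hw₁, hw₂, hu⟩ := valid5_iff.mp h
  simp only [hu, hw₁, hw₂]

/-- The orientation of `N₂` routing the inputs `s` to the outputs `t`: `αᵢ` is right-oriented iff
`sᵢ`, and `βⱼ` is right-oriented iff `tⱼ`, with `γⱼ` directed towards `u` in the latter case. -/
def switchOrient (s₁ s₂ t₁ t₂ : Bool) : E5 → V5
  | E5.al1 => bif s₁ then V5.u else V5.a1
  | E5.al2 => bif s₂ then V5.u else V5.a2
  | E5.ga1 => bif t₁ then V5.u else V5.w1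
  | E5.ga2 => bif t₂ then V5.u else V5.w2
  | E5.be1 => bif t₁ then V5.b1 else V5.w1
  | E5.be2 => bif t₂ then V5.b2 else V5.w2

section SwitchOrient

variable (s₁ s₂ t₁ t₂ : Bool)

theorem isOrient_switchOrient : IsOrient ends5 (switchOrient s₁ s₂ t₁ t₂) := by
  rintro ⟨⟩ <;> simp only [switchOrient, ends5] <;> grind

@[simp]
theorem switchOrient_al1_eq_u_iff : switchOrient s₁ s₂ t₁ t₂ E5.al1 = V5.u ↔ s₁ = true := by
  cases s₁ <;> simp [switchOrient]

@[simp]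
theorem switchOrient_al2_eq_u_iff : switchOrient s₁ s₂ t₁ t₂ E5.al2 = V5.u ↔ s₂ = true := by
  cases s₂ <;> simp [switchOrient]

@[simp]
theorem switchOrient_ga1_eq_u_iff : switchOrient s₁ s₂ t₁ t₂ E5.ga1 = V5.u ↔ t₁ = true := by
  cases t₁ <;> simp [switchOrient]

@[simp]
theorem switchOrient_ga2_eq_u_iff : switchOrient s₁ s₂ t₁ t₂ E5.ga2 = V5.u ↔ t₂ = true := by
  cases t₂ <;> simp [switchOrient]

@[simp]
theorem switchOrient_be1_eq_b1_iff : switchOrient s₁ s₂ t₁ t₂ E5.be1 = V5.b1 ↔ t₁ = true := by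
  cases t₁ <;> simp [switchOrient]

@[simp]
theorem switchOrient_be2_eq_b2_iff : switchOrient s₁ s₂ t₁ t₂ E5.be2 = V5.b2 ↔ t₂ = true := by
  cases t₂ <;> simp [switchOrient]

theorem valid5_switchOrient_iff :
    Valid5 (switchOrient s₁ s₂ t₁ t₂) ↔ s₁.toNat + s₂.toNat = t₁.toNat + t₂.toNat := by
  simp [valid5_iff, isOrient_switchOrient, Bool.toNat, Bool.cond_eq_ite]

end SwitchOrient

/-- the three properties of the gadget `N₂`:
(i) any input orientation extends to a valid orientation;
(ii) the number of right-oriented outputs equals the number of right-oriented inputs;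
(iii) with exactly one right-oriented input, either output can be the right-oriented one. -/
theorem stmt_5 :
    (∀ s₁ s₂ : Bool, ∃ o : E5 → V5, Valid5 o ∧
        ((o E5.al1 = V5.u) ↔ s₁ = true) ∧ ((o E5.al2 = V5.u) ↔ s₂ = true))
    ∧
    (∀ o : E5 → V5, Valid5 o →
        ((if o E5.be1 = V5.b1 then 1 else 0) + (if o E5.be2 = V5.b2 then 1 else 0) : ℕ) =
          (if o E5.al1 = V5.u then 1 else 0) + (if o E5.al2 = V5.u then 1 else 0))
    ∧
    (∀ s₁ s₂ : Bool, s₁ ≠ s₂ →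
        (∃ o : E5 → V5, Valid5 o ∧
          ((o E5.al1 = V5.u) ↔ s₁ = true) ∧ ((o E5.al2 = V5.u) ↔ s₂ = true) ∧
          o E5.be1 = V5.b1 ∧ o E5.be2 ≠ V5.b2) ∧
        (∃ o : E5 → V5, Valid5 o ∧
          ((o E5.al1 = V5.u) ↔ s₁ = true) ∧ ((o E5.al2 = V5.u) ↔ s₂ = true) ∧
          o E5.be1 ≠ V5.b1 ∧ o E5.be2 = V5.b2)) := by
  refine ⟨fun s₁ s₂ => ?inputs_extend, fun o ho => ho.outputs_eq_inputs, fun s₁ s₂ hs => ?routing⟩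
  case inputs_extend =>
    exact ⟨switchOrient s₁ s₂ s₁ s₂, (valid5_switchOrient_iff ..).mpr rfl,
      switchOrient_al1_eq_u_iff .., switchOrient_al2_eq_u_iff ..⟩
  case routing =>
    have hone : s₁.toNat + s₂.toNat = 1 := by
      revert s₁ s₂
      decide
    exact ⟨⟨switchOrient s₁ s₂ true false, (valid5_switchOrient_iff ..).mpr hone,
        switchOrient_al1_eq_u_iff .., switchOrient_al2_eq_u_iff .., rfl, nofun⟩,
      ⟨switchOrient s₁ s₂ false true, (valid5_switchOrient_iff ..).mpr hone,
        switchOrient_al1_eq_u_iff .., switchOrient_al2_eq_u_iff .., nofun, rfl⟩⟩
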